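/- Let n ≥ 0 and let X be a set of faces of I^{n+1} that is closed under passing to subfaces. For m ≥ 0 and α ∈ {−,+}, define (following Steiner's formula) d_m^α X := (∪_{a ∈ X, dim a ≤ m} R(a)) \ (∪_{b ∈ X, dim b = m+1} (R(b) \ ∂^α R(b))), and define d_m^α analogously for subface-closed sets of faces of Δ^n. Then X^⊥ is closed under passing to subfaces, and for every m ≥ 1 and every α ∈ {−,+} one has (d_m^α X)^⊥ = d_{m-1}^α (X^⊥). (This is the key computation in the proof that ⊥ sends valid composite expressions in I^{n+1} starting at the vertex −⋯− to valid composite expressions in Δ^n, shifting the composition index by one.) -/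

import Mathlib

/-- Positions of the letter `0` in a face (word over `{−,0,+}`) of the cube. -/
def zeros {N : ℕ} (a : Fin N → SignType) : Finset (Fin N) :=
  Finset.univ.filter fun i => a i = SignType.zero

/-- `b` is a subface of the cube face `a` iff at each position `b i = a i` or `a i = 0`. -/
def subfaceC {N : ℕ} (b a : Fin N → SignType) : Prop :=
  ∀ i, b i = a i ∨ a i = SignType.zero

/-- `R(a)`: the set of all subfaces of a cube face `a`. -/
def RC {N : ℕ} (a : Fin N → SignType) : Set (Fin N → SignType) :=
  { b | subfaceC b a }

/-- `s_a` for a cube face `a`: replace the `j`-th zero (1-based) by `−` if `j` is odd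
and by `+` if `j` is even. -/
def cubeS {N : ℕ} (a : Fin N → SignType) : Set (Fin N → SignType) :=
  { b | ∃ k : Fin (zeros a).card,
      b = Function.update a ((zeros a).orderEmbOfFin rfl k)
            (if k.val % 2 = 0 then SignType.neg else SignType.pos) }

/-- `t_a` for a cube face `a`: replace the `j`-th zero (1-based) by `+` if `j` is odd
and by `−` if `j` is even. -/
def cubeT {N : ℕ} (a : Fin N → SignType) : Set (Fin N → SignType) :=
  { b | ∃ k : Fin (zeros a).card,
      b = Function.update a ((zeros a).orderEmbOfFin rfl k)
            (if k.val % 2 = 0 then SignType.pos else SignType.neg) }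

/-- `∂^-R(a) = ⋃_{b ∈ s_a} R(b)` in the cube (`= ∅` when `dim a = 0` since `s_a = ∅`). -/
def bdryCneg {N : ℕ} (a : Fin N → SignType) : Set (Fin N → SignType) :=
  ⋃ b ∈ cubeS a, RC b

/-- `∂^+R(a) = ⋃_{b ∈ t_a} R(b)` in the cube (`= ∅` when `dim a = 0` since `t_a = ∅`). -/
def bdryCpos {N : ℕ} (a : Fin N → SignType) : Set (Fin N → SignType) :=
  ⋃ b ∈ cubeT a, RC b

/-- `R(σ)`: the set of all subfaces (nonempty subsets) of a simplex face `σ`. -/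
def RS {m : ℕ} (σ : Finset (Fin m)) : Set (Finset (Fin m)) :=
  { τ | τ.Nonempty ∧ τ ⊆ σ }

/-- `s_σ` for a simplex face `σ = {σ_0 < … < σ_r}`: the faces `σ \ {σ_{2k}}`. -/
def simpS {m : ℕ} (σ : Finset (Fin m)) : Set (Finset (Fin m)) :=
  { τ | ∃ k : Fin σ.card, k.val % 2 = 0 ∧ τ = σ.erase (σ.orderEmbOfFin rfl k) }

/-- `t_σ` for a simplex face `σ = {σ_0 < … < σ_r}`: the faces `σ \ {σ_{2k+1}}`. -/
def simpT {m : ℕ} (σ : Finset (Fin m)) : Set (Finset (Fin m)) :=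
  { τ | ∃ k : Fin σ.card, k.val % 2 = 1 ∧ τ = σ.erase (σ.orderEmbOfFin rfl k) }

/-- `∂^-R(σ) = ⋃_{τ ∈ s_σ} R(τ)` in the simplex (`= ∅` when `dim σ = 0`, since the
removal of the unique vertex gives the empty set, which has no nonempty subsets). -/
def bdrySneg {m : ℕ} (σ : Finset (Fin m)) : Set (Finset (Fin m)) :=
  ⋃ τ ∈ simpS σ, RS τ

/-- `∂^+R(σ) = ⋃_{τ ∈ t_σ} R(τ)` in the simplex. -/
def bdrySpos {m : ℕ} (σ : Finset (Fin m)) : Set (Finset (Fin m)) :=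
  ⋃ τ ∈ simpT σ, RS τ

/-- `phi σ` is the map `φ_n^-` sending a face `σ` of `Δ^n` to the face of `I^{n+1}`
whose letter at position `i` is `0` when `i ∈ σ` and `−` otherwise. -/
def phi {m : ℕ} (σ : Finset (Fin m)) : Fin m → SignType :=
  fun i => if i ∈ σ then SignType.zero else SignType.neg

/-- `y^⊥ = {i : y i = 0}`, the unique `φ`-preimage of a cube face `y ∈ Im φ`. -/
def perpF {N : ℕ} (y : Fin N → SignType) : Finset (Fin N) :=
  Finset.univ.filter fun i => y i = SignType.zero

/-- `X^⊥ = { y^⊥ : y ∈ X ∩ Im φ }` for a set `X` of cube faces. -/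
def perpSet {N : ℕ} (X : Set (Fin N → SignType)) : Set (Finset (Fin N)) :=
  { τ | ∃ y ∈ X, (∃ σ : Finset (Fin N), σ.Nonempty ∧ phi σ = y) ∧ τ = perpF y }

/-- Dimension of a cube face: the number of `0` letters. -/
def dimC {N : ℕ} (a : Fin N → SignType) : ℕ := (zeros a).card

/-- Dimension of a simplex face: `card − 1`. -/
def dimS {m : ℕ} (σ : Finset (Fin m)) : ℕ := σ.card - 1

/-- `∂^α R(a)` in the cube, `α ∈ {−,+}` coded by `Bool` (`false ↦ −`, `true ↦ +`). -/
def bdryC {N : ℕ} (α : Bool) (a : Fin N → SignType) : Set (Fin N → SignType) :=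
  if α then bdryCpos a else bdryCneg a

/-- `∂^α R(σ)` in the simplex, `α ∈ {−,+}` coded by `Bool` (`false ↦ −`, `true ↦ +`). -/
def bdryS {m : ℕ} (α : Bool) (σ : Finset (Fin m)) : Set (Finset (Fin m)) :=
  if α then bdrySpos σ else bdrySneg σ

/-- Steiner's operator
`d_m^α X := (⋃_{a ∈ X, dim a ≤ m} R(a)) \ (⋃_{b ∈ X, dim b = m+1} (R(b) \ ∂^α R(b)))`
for sets of cube faces. -/
def dOpC {N : ℕ} (α : Bool) (m : ℕ) (X : Set (Fin N → SignType)) :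
    Set (Fin N → SignType) :=
  (⋃ a ∈ {a | a ∈ X ∧ dimC a ≤ m}, RC a) \
    (⋃ b ∈ {b | b ∈ X ∧ dimC b = m + 1}, RC b \ bdryC α b)

/-- Steiner's operator `d_m^α` for sets of simplex faces. -/
def dOpS {N : ℕ} (α : Bool) (m : ℕ) (X : Set (Finset (Fin N))) :
    Set (Finset (Fin N)) :=
  (⋃ σ ∈ {σ | σ ∈ X ∧ dimS σ ≤ m}, RS σ) \
    (⋃ σ ∈ {σ | σ ∈ X ∧ dimS σ = m + 1}, RS σ \ bdryS α σ)

/-! If `φ τ` is a subface of a cube face `b`, then `b` has no letter `+`, so `b` is itself of the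
form `φ σ`, with `τ ⊆ σ`. Hence `⊥` commutes with any union indexed by faces `b` of sets of
subfaces of `b`. A facet of `φ σ` is of the form `φ τ` exactly when the letter it inserts is `−`,
and such facets delete the vertices of `σ` in the positions prescribed by `∂^α R(σ)`. So `⊥`
carries every ingredient of Steiner's formula to its simplicial counterpart, and the index drops
by one because `φ` raises dimensions by one. -/

section Phi

variable {N : ℕ} {σ τ : Finset (Fin N)} {b : Fin N → SignType}

theorem zeros_phi (σ : Finset (Fin N)) : zeros (phi σ) = σ := by
  ext i
  by_cases hi : i ∈ σ <;> simp [zeros, phi, hi]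

theorem phi_injective : Function.Injective (phi (m := N)) :=
  Function.LeftInverse.injective zeros_phi

theorem phi_ne_pos (σ : Finset (Fin N)) (i : Fin N) : phi σ i ≠ SignType.pos := by
  unfold phi
  split_ifs <;> decide

theorem phi_zeros (hb : ∀ i, b i ≠ SignType.pos) : phi (zeros b) = b := by
  funext i
  have := hb i
  cases hi : b i <;> simp_all [phi, zeros]

theorem phi_subfaceC_phi_iff : subfaceC (phi τ) (phi σ) ↔ τ ⊆ σ := by
  refine forall_congr' fun i => ?_
  by_cases hτ : i ∈ τ <;> by_cases hσ : i ∈ σ <;> simp [phi, hτ, hσ]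

theorem exists_phi_eq_of_phi_subfaceC (h : subfaceC (phi τ) b) : ∃ σ, phi σ = b := by
  refine ⟨zeros b, phi_zeros fun i hi => ?_⟩
  rcases h i with h | h
  · exact phi_ne_pos τ i (h.trans hi)
  · exact absurd (h.symm.trans hi) (by decide)

theorem update_phi_neg (σ : Finset (Fin N)) (p : Fin N) :
    Function.update (phi σ) p SignType.neg = phi (σ.erase p) := by
  funext i
  by_cases hi : i = p
  · subst hi; simp [phi]
  · simp [phi, hi]

theorem phi_eq_update_phi_iff {p : Fin N} {v : SignType} (hv : v ≠ SignType.zero) :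
    phi τ = Function.update (phi σ) p v ↔ v = SignType.neg ∧ τ = σ.erase p := by
  cases v with
  | zero => exact absurd rfl hv
  | neg => simp only [update_phi_neg, phi_injective.eq_iff, true_and]
  | pos =>
    have hne : phi τ ≠ Function.update (phi σ) p SignType.pos := fun h =>
      phi_ne_pos τ p (by rw [h, Function.update_self])
    exact iff_of_false hne fun h => absurd h.1 (by decide)

theorem phi_mem_cubeS_phi_iff : phi τ ∈ cubeS (phi σ) ↔ τ ∈ simpS σ := by
  conv_rhs => rw [← zeros_phi σ]
  refine exists_congr fun k => ?_
  rw [phi_eq_update_phi_iff (by split_ifs <;> decide)]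
  simp [zeros_phi]

theorem phi_mem_cubeT_phi_iff : phi τ ∈ cubeT (phi σ) ↔ τ ∈ simpT σ := by
  conv_rhs => rw [← zeros_phi σ]
  refine exists_congr fun k => ?_
  rw [phi_eq_update_phi_iff (by split_ifs <;> decide)]
  simp [zeros_phi]

theorem dimC_phi (hσ : σ.Nonempty) : dimC (phi σ) = dimS σ + 1 := by
  have := hσ.card_pos
  rw [dimC, zeros_phi, dimS]
  omega

end Phi

section PerpSet

variable {N : ℕ} {σ τ : Finset (Fin N)} {X : Set (Fin N → SignType)}

theorem mem_perpSet : τ ∈ perpSet X ↔ τ.Nonempty ∧ phi τ ∈ X := by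
  constructor
  · rintro ⟨_, hX, ⟨σ, hσ, rfl⟩, hτ⟩
    obtain rfl : τ = σ := hτ.trans (zeros_phi σ)
    exact ⟨hσ, hX⟩
  · rintro ⟨hτ, hX⟩
    exact ⟨phi τ, hX, ⟨τ, hτ, rfl⟩, (zeros_phi τ).symm⟩

theorem mem_perpSet_of_subset (hX : ∀ a ∈ X, ∀ b, subfaceC b a → b ∈ X)
    (hσ : σ ∈ perpSet X) (hτ : τ.Nonempty) (hτσ : τ ⊆ σ) : τ ∈ perpSet X :=
  mem_perpSet.2 ⟨hτ, hX _ (mem_perpSet.1 hσ).2 _ (phi_subfaceC_phi_iff.2 hτσ)⟩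

theorem perpSet_sdiff (X Y : Set (Fin N → SignType)) :
    perpSet (X \ Y) = perpSet X \ perpSet Y := by
  ext τ
  simp only [mem_perpSet, Set.mem_sdiff]
  tauto

theorem perpSet_biUnion (X : Set (Fin N → SignType))
    {F : (Fin N → SignType) → Set (Fin N → SignType)} (hF : ∀ b, F b ⊆ RC b) :
    perpSet (⋃ b ∈ X, F b) = ⋃ σ ∈ perpSet X, perpSet (F (phi σ)) := by
  ext τ
  simp only [mem_perpSet, Set.mem_iUnion, exists_prop]
  constructor
  · rintro ⟨hτ, b, hbX, hτb⟩
    obtain ⟨σ, rfl⟩ := exists_phi_eq_of_phi_subfaceC (hF b hτb)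
    have hτσ : τ ⊆ σ := phi_subfaceC_phi_iff.1 (hF _ hτb)
    exact ⟨σ, ⟨hτ.mono hτσ, hbX⟩, hτ, hτb⟩
  · rintro ⟨σ, ⟨-, hσX⟩, hτ, hτσ⟩
    exact ⟨hτ, phi σ, hσX, hτσ⟩

theorem perpSet_RC_phi (σ : Finset (Fin N)) : perpSet (RC (phi σ)) = RS σ := by
  ext τ
  exact mem_perpSet.trans (and_congr_right' phi_subfaceC_phi_iff)

theorem perpSet_biUnion_RC (X : Set (Fin N → SignType)) :
    perpSet (⋃ b ∈ X, RC b) = ⋃ σ ∈ phi ⁻¹' X, RS σ := by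
  rw [perpSet_biUnion X fun _ => Set.Subset.rfl]
  ext τ
  simp only [perpSet_RC_phi, Set.mem_iUnion, exists_prop, mem_perpSet, Set.mem_preimage]
  exact exists_congr fun σ =>
    and_congr_left fun hτσ => and_iff_right (hτσ.1.mono hτσ.2)

theorem perpSet_bdryC_phi (α : Bool) (σ : Finset (Fin N)) :
    perpSet (bdryC α (phi σ)) = bdryS α σ := by
  have hS : phi ⁻¹' cubeS (phi σ) = simpS σ := Set.ext fun _ => phi_mem_cubeS_phi_iff
  have hT : phi ⁻¹' cubeT (phi σ) = simpT σ := Set.ext fun _ => phi_mem_cubeT_phi_iff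
  cases α
  · exact (perpSet_biUnion_RC _).trans (by rw [hS]; rfl)
  · exact (perpSet_biUnion_RC _).trans (by rw [hT]; rfl)

theorem perpSet_sep_dimC (X : Set (Fin N → SignType)) (p : ℕ → Prop) :
    perpSet {a | a ∈ X ∧ p (dimC a)} = {σ | σ ∈ perpSet X ∧ p (dimS σ + 1)} := by
  ext σ
  simp only [mem_perpSet, Set.mem_ofPred_eq, and_assoc]
  exact and_congr_right fun hσ => by rw [dimC_phi hσ]

theorem perpSet_dOpC_succ (α : Bool) (m : ℕ) (X : Set (Fin N → SignType)) :
    perpSet (dOpC α (m + 1) X) = dOpS α m (perpSet X) := by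
  rw [dOpC, perpSet_sdiff, perpSet_biUnion _ fun _ => Set.Subset.rfl,
    perpSet_biUnion _ fun _ => Set.sdiff_subset,
    perpSet_sep_dimC X (· ≤ m + 1), perpSet_sep_dimC X (· = m + 1 + 1)]
  simp only [perpSet_sdiff, perpSet_RC_phi, perpSet_bdryC_phi, add_le_add_iff_right,
    add_left_inj, dOpS]

end PerpSet

theorem stmt5_general {N : ℕ} (X : Set (Fin N → SignType)) (m : ℕ) (α : Bool) :
    ((∀ a ∈ X, ∀ b, subfaceC b a → b ∈ X) →
      ∀ σ ∈ perpSet X, ∀ τ : Finset (Fin N), τ.Nonempty → τ ⊆ σ → τ ∈ perpSet X) ∧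
    perpSet (dOpC α (m + 1) X) = dOpS α m (perpSet X) :=
  ⟨fun hX _ hσ _ hτ hτσ => mem_perpSet_of_subset hX hσ hτ hτσ, perpSet_dOpC_succ α m X⟩

/-- If `X` is a subface-closed set of faces of `I^{n+1}`, then `X^⊥` is closed under
passing to (nonempty) subfaces, and for every `m ≥ 1` and `α ∈ {−,+}` one has
`(d_m^α X)^⊥ = d_{m-1}^α (X^⊥)`. -/
theorem stmt5 (n : ℕ) (X : Set (Fin (n + 1) → SignType))
    (hX : ∀ a ∈ X, ∀ b, subfaceC b a → b ∈ X) (m : ℕ) (hm : 1 ≤ m) (α : Bool) :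
    (∀ σ ∈ perpSet X, ∀ τ : Finset (Fin (n + 1)), τ.Nonempty → τ ⊆ σ →
        τ ∈ perpSet X) ∧
    perpSet (dOpC α m X) = dOpS α (m - 1) (perpSet X) := by
  obtain ⟨k, rfl⟩ := Nat.exists_eq_add_of_le' hm
  exact (stmt5_general X k α).imp_left fun h => h hX
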